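/- For every dimension N ≥ 1, every degree k ∈ ℕ, every s ∈ {1, …, k+1}, every p ∈ [1, +∞], and every ρ > 0, there exists a constant C > 0 depending only on N, ρ, k, s and p such that: for every open bounded set U ⊆ ℝ^N with diameter h_U which is star-shaped with respect to a ball of radius ρ·h_U and every function v smooth on an open neighbourhood of the closure of U, one has |π_U^k v|_{W^{s,p}(U)} ≤ C · |v|_{W^{s,p}(U)}, where π_U^k v is the L^2-projection of v onto polynomials of total degree at most k. -/

import Mathlib

/-!
Write `h` for the diameter of `U`. Subtracting from `v` a polynomial `w` of degree `< s` changes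
neither `D^s v` nor `D^s P`, and `P - w` is the projection of `v - w` because `s ≤ k + 1`. On the
finite-dimensional space of polynomials of degree at most `k` all norms are equivalent, so after
rescaling to unit size `|D^s (P - w)|` is bounded on `U` by a constant times
`h ^ (-s - N) * ∫_U |v - w|`. For `w` take the Taylor polynomial of `v` at a point of the ball with
respect to which `U` is star-shaped: averaging the integral remainder over this point produces one
for which `∫_U |v - w|` is at most a constant times `h ^ s * ∫_U |D^s v|`. The resulting bound
`|D^s P| ≤ C * h ^ (-N) * ∫_U |D^s v|` yields the `L^p` estimate for every `p` at once, since
Hölder's inequality costs a factor `|U|`, which is at most a multiple of `h ^ N`.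
-/

open MeasureTheory Metric Set
open scoped ENNReal

noncomputable section

/-- `w : ℝ^N → ℝ` is (given by) a multivariate polynomial of total degree at most `k`. -/
def IsPolyDegLE (N k : ℕ) (w : EuclideanSpace ℝ (Fin N) → ℝ) : Prop :=
  ∃ P : MvPolynomial (Fin N) ℝ, P.totalDegree ≤ k ∧ ∀ x, w x = MvPolynomial.eval (fun i => x i) P

/-- `U` is star-shaped with respect to a ball of radius `ρ * diam U`. -/
def StarShapedWrtBall {N : ℕ} (ρ : ℝ) (U : Set (EuclideanSpace ℝ (Fin N))) : Prop :=
  ∃ c, Metric.ball c (ρ * Metric.diam U) ⊆ U ∧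
    ∀ x ∈ Metric.ball c (ρ * Metric.diam U), ∀ y ∈ U, segment ℝ x y ⊆ U

/-- The `W^{m,p}(U)`-seminorm of `v`: the `L^p(U)`-norm of the norm of the `m`-th iterated
derivative. -/
def sobSemi {N : ℕ} (m : ℕ) (p : ℝ≥0∞) (U : Set (EuclideanSpace ℝ (Fin N)))
    (v : EuclideanSpace ℝ (Fin N) → ℝ) : ℝ≥0∞ :=
  eLpNorm (fun x => ‖iteratedFDeriv ℝ m v x‖) p (volume.restrict U)

section Taylor

open scoped Nat

variable {E F : Type*} [NormedAddCommGroup E] [NormedSpace ℝ E] [NormedAddCommGroup F]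
  [NormedSpace ℝ F]

theorem iteratedFDeriv_eq_zero_of_hasFiniteFPowerSeriesOnBall {f : E → F}
    {p : FormalMultilinearSeries ℝ E F} {a : E} {n : ℕ}
    (h : HasFiniteFPowerSeriesOnBall f p a n ⊤) : iteratedFDeriv ℝ n f = 0 := by
  funext x
  have hx : HasFiniteFPowerSeriesOnBall f (p.changeOrigin (x - a)) x n ⊤ := by
    simpa using h.changeOrigin (y := x - a) (by simp)
  have hxw : HasFPowerSeriesWithinOnBall f (p.changeOrigin (x - a)) univ x ⊤ :=
    hasFPowerSeriesWithinOnBall_univ.2 hx.toHasFPowerSeriesOnBall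
  have hf : AnalyticOn ℝ f univ := by
    simpa using hx.cpolynomialOn.analyticOn
  rw [← iteratedFDerivWithin_univ]
  exact hxw.iteratedFDerivWithin_eq_zero hf uniqueDiffOn_univ (mem_univ x) (hx.finite n le_rfl)

/-- The Taylor polynomial of `f` at `a` of degree `< n`. -/
def taylorPoly (n : ℕ) (f : E → F) (a x : E) : F :=
  ∑ j ∈ Finset.range n, (j ! : ℝ)⁻¹ • iteratedFDeriv ℝ j f a fun _ ↦ x - a

theorem iteratedFDeriv_taylorPoly (n : ℕ) (f : E → F) (a : E) :
    iteratedFDeriv ℝ n (taylorPoly n f a) = 0 := by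
  refine iteratedFDeriv_eq_zero_of_hasFiniteFPowerSeriesOnBall (a := a) (p := fun j ↦
    if j < n then (j ! : ℝ)⁻¹ • iteratedFDeriv ℝ j f a else 0) (.mk' ?_ (by simp) fun x _ ↦ ?_)
  · intro m hm
    exact if_neg hm.not_gt
  · refine Finset.sum_congr rfl fun j hj ↦ ?_
    simp [Finset.mem_range.1 hj]

theorem enorm_sub_taylorPoly_le [CompleteSpace F] {f : E → F} {n : ℕ} {a x : E}
    (hf : ∀ z ∈ segment ℝ a x, ContDiffAt ℝ (n + 1) f z) :
    ‖f x - taylorPoly (n + 1) f a x‖ₑ ≤ ‖x - a‖ₑ ^ (n + 1) *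
      ∫⁻ t in Ioc (0 : ℝ) 1, ‖iteratedFDeriv ℝ (n + 1) f (a + t • (x - a))‖ₑ := by
  have taylor := map_add_eq_sum_add_integral_iteratedFDeriv (f := f) (x := a) (y := x - a) (n := n)
    fun t ht ↦ hf _ (segment_eq_image' ℝ a x ▸ mem_image_of_mem _ ht)
  have remainder_le : ∀ t ∈ Ioc (0 : ℝ) 1,
      ‖(1 - t) ^ n • iteratedFDeriv ℝ (n + 1) f (a + t • (x - a)) fun _ ↦ x - a‖ₑ ≤
        ‖x - a‖ₑ ^ (n + 1) * ‖iteratedFDeriv ℝ (n + 1) f (a + t • (x - a))‖ₑ := by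
    intro t ht
    have hweight : ‖(1 - t) ^ n‖ₑ ≤ 1 := by
      rw [enorm_pow, ← ofReal_norm, Real.norm_of_nonneg (sub_nonneg.2 ht.2)]
      exact pow_le_one₀ (by simp) (by simpa using ht.1.le)
    have hop : ‖iteratedFDeriv ℝ (n + 1) f (a + t • (x - a)) fun _ ↦ x - a‖ₑ ≤
        ‖iteratedFDeriv ℝ (n + 1) f (a + t • (x - a))‖ₑ * ‖x - a‖ₑ ^ (n + 1) := by
      simpa [enorm_eq_nnnorm, ← ENNReal.coe_pow, ← ENNReal.coe_mul] using
        (iteratedFDeriv ℝ (n + 1) f (a + t • (x - a))).le_opNNNorm fun _ ↦ x - a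
    rw [enorm_smul, mul_comm (‖x - a‖ₑ ^ (n + 1))]
    exact (mul_le_of_le_one_left' hweight).trans hop
  have hfactorial : ‖(n ! : ℝ)⁻¹‖ₑ ≤ 1 := by
    rw [← ofReal_norm, norm_inv, Real.norm_natCast, ENNReal.ofReal_le_one]
    exact inv_le_one_of_one_le₀ (mod_cast n.factorial_pos)
  rw [add_sub_cancel] at taylor
  rw [taylor, taylorPoly, add_sub_cancel_left, enorm_smul,
    intervalIntegral.integral_of_le zero_le_one]
  calc _ ≤ ∫⁻ t in Ioc (0 : ℝ) 1,
        ‖(1 - t) ^ n • iteratedFDeriv ℝ (n + 1) f (a + t • (x - a)) fun _ ↦ x - a‖ₑ :=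
        (mul_le_of_le_one_left' hfactorial).trans (enorm_integral_le_lintegral_enorm _)
    _ ≤ ∫⁻ t in Ioc (0 : ℝ) 1,
        ‖x - a‖ₑ ^ (n + 1) * ‖iteratedFDeriv ℝ (n + 1) f (a + t • (x - a))‖ₑ :=
        setLIntegral_mono' measurableSet_Ioc remainder_le
    _ = _ := lintegral_const_mul' _ _ (by finiteness)

end Taylor

section Averaging

open Module

variable {E : Type*} [NormedAddCommGroup E] [NormedSpace ℝ E] [FiniteDimensional ℝ E]
  [MeasurableSpace E] [BorelSpace E] {μ : Measure E} [μ.IsAddHaarMeasure]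

theorem lintegral_comp_add_smul {g : E → ℝ≥0∞} (hg : Measurable g) (a : E) {r : ℝ} (hr : r ≠ 0) :
    ∫⁻ x, g (a + r • x) ∂μ = ENNReal.ofReal |(r ^ finrank ℝ E)⁻¹| * ∫⁻ x, g x ∂μ := by
  rw [← lintegral_map (f := fun x ↦ g (a + x)) (by fun_prop) (measurable_const_smul r),
    Measure.map_addHaar_smul μ hr, lintegral_smul_measure, lintegral_add_left_eq_self, smul_eq_mul]

theorem lintegral_comp_add_smul_le {g : E → ℝ≥0∞} (hg : Measurable g) (a : E) {r : ℝ}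
    (hr : 1 / 2 ≤ r) : ∫⁻ x, g (a + r • x) ∂μ ≤ 2 ^ finrank ℝ E * ∫⁻ x, g x ∂μ := by
  have hr₀ : 0 < r := by linarith
  have hinv : ENNReal.ofReal r⁻¹ ≤ 2 := by
    rw [ENNReal.ofReal_le_ofNat, inv_le_comm₀ hr₀ two_pos]
    linarith
  rw [lintegral_comp_add_smul hg a hr₀.ne', abs_of_pos (by positivity), ← inv_pow,
    ENNReal.ofReal_pow (by positivity)]
  gcongr

/-- One of the two weights `t`, `1 - t` is at least `1 / 2`; integrate first in the variable that
carries it. -/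
theorem lintegral_lintegral_comp_lineMap_le {g : E → ℝ≥0∞} (hg : Measurable g) (A B : Set E)
    (t : ℝ) :
    ∫⁻ y in B, ∫⁻ x in A, g (y + t • (x - y)) ∂μ ∂μ ≤
      2 ^ finrank ℝ E * (μ B + μ A) * ∫⁻ x, g x ∂μ := by
  rcases le_total (1 / 2) t with ht | ht
  · calc ∫⁻ y in B, ∫⁻ x in A, g (y + t • (x - y)) ∂μ ∂μ
        ≤ ∫⁻ _ in B, 2 ^ finrank ℝ E * ∫⁻ x, g x ∂μ ∂μ := by
          refine lintegral_mono fun y ↦ (setLIntegral_le_lintegral A _).trans ?_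
          have hline : ∀ x, y + t • (x - y) = (1 - t) • y + t • x := fun x ↦ by module
          simpa only [hline] using lintegral_comp_add_smul_le hg ((1 - t) • y) ht
      _ = 2 ^ finrank ℝ E * μ B * ∫⁻ x, g x ∂μ := by rw [setLIntegral_const, mul_right_comm]
      _ ≤ _ := by gcongr; exact le_self_add
  · calc ∫⁻ y in B, ∫⁻ x in A, g (y + t • (x - y)) ∂μ ∂μ
        = ∫⁻ x in A, ∫⁻ y in B, g (y + t • (x - y)) ∂μ ∂μ :=
          lintegral_lintegral_swap (by fun_prop)
      _ ≤ ∫⁻ _ in A, 2 ^ finrank ℝ E * ∫⁻ x, g x ∂μ ∂μ := by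
          refine lintegral_mono fun x ↦ (setLIntegral_le_lintegral B _).trans ?_
          have hline : ∀ y, y + t • (x - y) = t • x + (1 - t) • y := fun y ↦ by module
          simpa only [hline] using lintegral_comp_add_smul_le hg (t • x) (by linarith)
      _ = 2 ^ finrank ℝ E * μ A * ∫⁻ x, g x ∂μ := by rw [setLIntegral_const, mul_right_comm]
      _ ≤ _ := by gcongr; exact le_add_self

theorem exists_mem_lintegral_lintegral_segment_le {g : E → ℝ≥0∞} (hg : Measurable g) (A : Set E)
    {B : Set E} (hB₀ : μ B ≠ 0) (hB : μ B ≠ ∞) :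
    ∃ y ∈ B, ∫⁻ x in A, (∫⁻ t in Ioc (0 : ℝ) 1, g (y + t • (x - y))) ∂μ ≤
      2 ^ finrank ℝ E * ((μ B + μ A) / μ B) * ∫⁻ x, g x ∂μ := by
  set G : E → ℝ → ℝ≥0∞ := fun y t ↦ ∫⁻ x in A, g (y + t • (x - y)) ∂μ
  have hG : Measurable (Function.uncurry G) :=
    Measurable.lintegral_prod_right' (f := fun z : (E × ℝ) × E ↦ g (z.1.1 + z.1.2 • (z.2 - z.1.1)))
      (by fun_prop)
  have haverage : ∫⁻ y in B, (∫⁻ t in Ioc (0 : ℝ) 1, G y t) ∂μ ≤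
      2 ^ finrank ℝ E * (μ B + μ A) * ∫⁻ x, g x ∂μ :=
    calc ∫⁻ y in B, (∫⁻ t in Ioc (0 : ℝ) 1, G y t) ∂μ
        = ∫⁻ t in Ioc (0 : ℝ) 1, ∫⁻ y in B, G y t ∂μ :=
          lintegral_lintegral_swap hG.aemeasurable
      _ ≤ ∫⁻ _ in Ioc (0 : ℝ) 1, 2 ^ finrank ℝ E * (μ B + μ A) * ∫⁻ x, g x ∂μ :=
          lintegral_mono fun t ↦ lintegral_lintegral_comp_lineMap_le hg A B t
      _ = _ := by simp
  obtain ⟨y, hyB, hy⟩ := exists_le_setLAverage hB₀ hB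
    (f := fun y ↦ ∫⁻ t in Ioc (0 : ℝ) 1, G y t) hG.lintegral_prod_right'.aemeasurable
  refine ⟨y, hyB, ?_⟩
  rw [lintegral_lintegral_swap (by fun_prop)]
  calc _ ≤ (2 ^ finrank ℝ E * (μ B + μ A) * ∫⁻ x, g x ∂μ) / μ B := by
        rw [setLAverage_eq] at hy
        exact hy.trans (ENNReal.div_le_div_right haverage _)
    _ = _ := by simp only [div_eq_mul_inv]; ring

theorem exists_mem_lintegral_sub_taylorPoly_le {F : Type*} [NormedAddCommGroup F] [NormedSpace ℝ F]
    [CompleteSpace F] {f : E → F} {n : ℕ} {U B : Set E} (hU : IsOpen U)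
    (hf : ContDiffOn ℝ (n + 1) f U) (hstar : ∀ y ∈ B, StarConvex ℝ y U)
    (hB₀ : μ B ≠ 0) (hB : μ B ≠ ∞) :
    ∃ y ∈ B, ∫⁻ x in U, ‖f x - taylorPoly (n + 1) f y x‖ₑ ∂μ ≤
      ediam U ^ (n + 1) * (2 ^ finrank ℝ E * ((μ B + μ U) / μ B) *
        ∫⁻ x in U, ‖iteratedFDeriv ℝ (n + 1) f x‖ₑ ∂μ) := by
  classical
  set g : E → ℝ≥0∞ := U.indicator fun x ↦ ‖iteratedFDeriv ℝ (n + 1) f x‖ₑ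
  have hg : Measurable g := by
    have hcont : ContinuousOn (iteratedFDeriv ℝ (n + 1) f) U :=
      ContinuousOn.continuousOn_iteratedFDeriv hf hU (by norm_cast)
    simpa only [g, ← piecewise_eq_indicator] using
      hcont.enorm.measurable_piecewise (g := 0) continuousOn_const hU.measurableSet
  obtain ⟨y, hyB, hy⟩ := exists_mem_lintegral_lintegral_segment_le hg U hB₀ hB
  refine ⟨y, hyB, ?_⟩
  have hpoint : ∀ x ∈ U, ‖f x - taylorPoly (n + 1) f y x‖ₑ ≤
      ediam U ^ (n + 1) * ∫⁻ t in Ioc (0 : ℝ) 1, g (y + t • (x - y)) := by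
    intro x hx
    have hseg : segment ℝ y x ⊆ U := (hstar y hyB).segment_subset hx
    refine (enorm_sub_taylorPoly_le fun z hz ↦ hf.contDiffAt (hU.mem_nhds (hseg hz))).trans ?_
    refine mul_le_mul' ?_ (setLIntegral_mono' measurableSet_Ioc fun t ht ↦ ?_)
    · rw [← edist_eq_enorm_sub]
      gcongr
      exact edist_le_ediam_of_mem hx (hseg (left_mem_segment ℝ y x))
    · have hz : y + t • (x - y) ∈ U :=
        hseg (segment_eq_image' ℝ y x ▸ mem_image_of_mem _ (Ioc_subset_Icc_self ht))
      exact (indicator_of_mem hz fun x ↦ ‖iteratedFDeriv ℝ (n + 1) f x‖ₑ).ge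
  calc _ ≤ ∫⁻ x in U, ediam U ^ (n + 1) * (∫⁻ t in Ioc (0 : ℝ) 1, g (y + t • (x - y))) ∂μ :=
        setLIntegral_mono' hU.measurableSet hpoint
    _ = ediam U ^ (n + 1) * ∫⁻ x in U, (∫⁻ t in Ioc (0 : ℝ) 1, g (y + t • (x - y))) ∂μ :=
        lintegral_const_mul _ (Measurable.lintegral_prod_right'
          (f := fun z : E × ℝ ↦ g (y + z.2 • (z.1 - y))) (by fun_prop))
    _ ≤ _ := by
        gcongr
        rwa [lintegral_indicator hU.measurableSet] at hy

end Averaging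

theorem eLpNorm_le_of_ae_enorm_le_lintegral {α E F : Type*} [MeasurableSpace α] {μ : Measure α}
    [IsFiniteMeasure μ] [NormedAddCommGroup E] [NormedAddCommGroup F] {f : α → E} {g : α → F}
    {C p : ℝ≥0∞} (hp : 1 ≤ p) (hg : AEStronglyMeasurable g μ)
    (hfg : ∀ᵐ x ∂μ, ‖f x‖ₑ ≤ C * ∫⁻ y, ‖g y‖ₑ ∂μ) :
    eLpNorm f p μ ≤ C * μ univ * eLpNorm g p μ := by
  rcases eq_zero_or_neZero μ with rfl | hμ
  · simp
  have hholder := eLpNorm_le_eLpNorm_mul_rpow_measure_univ hp hg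
  rw [eLpNorm_one_eq_lintegral_enorm] at hholder
  have hpow : μ univ ^ (1 / (1 : ℝ≥0∞).toReal - 1 / p.toReal) * μ univ ^ p.toReal⁻¹ = μ univ := by
    rw [← ENNReal.rpow_add _ _ (NeZero.ne _) (measure_ne_top μ _)]
    simp
  calc eLpNorm f p μ ≤ C * (∫⁻ y, ‖g y‖ₑ ∂μ) * μ univ ^ p.toReal⁻¹ :=
        eLpNorm_le_of_ae_enorm_bound hfg
    _ ≤ C * (eLpNorm g p μ * μ univ ^ (1 / (1 : ℝ≥0∞).toReal - 1 / p.toReal)) *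
        μ univ ^ p.toReal⁻¹ := by gcongr
    _ = C * (μ univ ^ (1 / (1 : ℝ≥0∞).toReal - 1 / p.toReal) * μ univ ^ p.toReal⁻¹) *
        eLpNorm g p μ := by ring
    _ = C * μ univ * eLpNorm g p μ := by rw [hpow]

section Polynomials

variable {N k l : ℕ} {f g : EuclideanSpace ℝ (Fin N) → ℝ}

/-- The space of polynomial functions of total degree at most `k` on `ℝ^N`, as the image of the
formal polynomials of total degree at most `k`. -/
def polyDegLE (N k : ℕ) : Submodule ℝ (EuclideanSpace ℝ (Fin N) → ℝ) :=
  (MvPolynomial.restrictTotalDegree (Fin N) ℝ k).map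
    (LinearMap.pi fun x ↦ (MvPolynomial.aeval fun i ↦ x i).toLinearMap)

instance : FiniteDimensional ℝ (polyDegLE N k) :=
  inferInstanceAs (Module.Finite ℝ (Submodule.map _ _))

theorem mem_polyDegLE : f ∈ polyDegLE N k ↔ IsPolyDegLE N k f := by
  simp [polyDegLE, IsPolyDegLE, MvPolynomial.mem_restrictTotalDegree, funext_iff, eq_comm,
    MvPolynomial.aeval_eq_eval]

namespace IsPolyDegLE

theorem add (hf : IsPolyDegLE N k f) (hg : IsPolyDegLE N k g) : IsPolyDegLE N k (f + g) :=
  mem_polyDegLE.1 (add_mem (mem_polyDegLE.2 hf) (mem_polyDegLE.2 hg))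

theorem sub (hf : IsPolyDegLE N k f) (hg : IsPolyDegLE N k g) : IsPolyDegLE N k (f - g) :=
  mem_polyDegLE.1 (sub_mem (mem_polyDegLE.2 hf) (mem_polyDegLE.2 hg))

theorem sum {ι : Type*} {s : Finset ι} {f : ι → EuclideanSpace ℝ (Fin N) → ℝ}
    (hf : ∀ i ∈ s, IsPolyDegLE N k (f i)) : IsPolyDegLE N k fun x ↦ ∑ i ∈ s, f i x := by
  have := mem_polyDegLE.1 (sum_mem fun i hi ↦ mem_polyDegLE.2 (hf i hi))
  simpa [Finset.sum_fn] using this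

theorem mono (hkl : k ≤ l) (hf : IsPolyDegLE N k f) : IsPolyDegLE N l f := by
  obtain ⟨P, hPk, hP⟩ := hf
  exact ⟨P, hPk.trans hkl, hP⟩

theorem const (c : ℝ) : IsPolyDegLE N k fun _ ↦ c :=
  ⟨MvPolynomial.C c, by simp, by simp⟩

theorem coord (i : Fin N) : IsPolyDegLE N 1 fun x ↦ x i :=
  ⟨MvPolynomial.X i, by simp, by simp⟩

theorem mul (hf : IsPolyDegLE N k f) (hg : IsPolyDegLE N l g) :
    IsPolyDegLE N (k + l) fun x ↦ f x * g x := by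
  obtain ⟨P, hPk, hP⟩ := hf
  obtain ⟨Q, hQl, hQ⟩ := hg
  exact ⟨P * Q, (MvPolynomial.totalDegree_mul P Q).trans (add_le_add hPk hQl), by simp [hP, hQ]⟩

theorem prod {ι : Type*} {s : Finset ι} {d : ι → ℕ} {f : ι → EuclideanSpace ℝ (Fin N) → ℝ}
    (hf : ∀ i ∈ s, IsPolyDegLE N (d i) (f i)) :
    IsPolyDegLE N (∑ i ∈ s, d i) fun x ↦ ∏ i ∈ s, f i x := by
  classical
  induction s using Finset.induction_on with
  | empty => simpa using const 1
  | insert i s hi ih =>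
    simp only [Finset.sum_insert hi, Finset.prod_insert hi]
    exact (hf i (by simp)).mul (ih fun j hj ↦ hf j (by simp [hj]))

theorem pow (hf : IsPolyDegLE N k f) (n : ℕ) : IsPolyDegLE N (n * k) fun x ↦ f x ^ n := by
  simpa using prod (s := Finset.range n) fun _ _ ↦ hf

theorem contDiff {n : WithTop ℕ∞} (hf : IsPolyDegLE N k f) : ContDiff ℝ n f := by
  obtain ⟨P, -, hP⟩ := hf
  obtain rfl : f = fun x ↦ ∑ d ∈ P.support, P.coeff d * ∏ i, x i ^ d i := by
    ext x
    rw [hP, MvPolynomial.eval_eq']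
  fun_prop

theorem comp {M : ℕ} {φ : EuclideanSpace ℝ (Fin M) → EuclideanSpace ℝ (Fin N)}
    (hf : IsPolyDegLE N k f) (hφ : ∀ i, IsPolyDegLE M l fun x ↦ φ x i) :
    IsPolyDegLE M (k * l) fun x ↦ f (φ x) := by
  obtain ⟨P, hPk, hP⟩ := hf
  simp only [hP, MvPolynomial.eval_eq']
  refine sum fun d hd ↦ ?_
  have hmonomial := (const (k := 0) (P.coeff d)).mul
    (prod (s := Finset.univ) fun i _ ↦ (hφ i).pow (d i))
  refine hmonomial.mono ?_
  rw [zero_add, ← Finset.sum_mul]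
  have hd := (MvPolynomial.le_totalDegree hd).trans hPk
  rw [Finsupp.sum_fintype _ _ (by simp)] at hd
  gcongr

theorem comp_add_smul (hf : IsPolyDegLE N k f) (a : EuclideanSpace ℝ (Fin N)) (r : ℝ) :
    IsPolyDegLE N k fun x ↦ f (a + r • x) := by
  have hcoord (i : Fin N) : IsPolyDegLE N 1 fun x ↦ (a + r • x) i := by
    have haffine := (const (k := 1) (a i)).add ((const (k := 0) r).mul (coord i))
    simpa [Pi.add_def] using haffine
  simpa using hf.comp hcoord

end IsPolyDegLE

theorem isPolyDegLE_multilinear_diag {j : ℕ}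
    (f : ContinuousMultilinearMap ℝ (fun _ : Fin j ↦ EuclideanSpace ℝ (Fin N)) ℝ) :
    IsPolyDegLE N j fun x ↦ f fun _ ↦ x := by
  have hexpand (x : EuclideanSpace ℝ (Fin N)) : (f fun _ ↦ x) = ∑ r : Fin j → Fin N,
      (∏ i, x (r i)) * f fun i ↦ EuclideanSpace.basisFun (Fin N) ℝ (r i) := by
    have hx : x = ∑ i, x i • EuclideanSpace.basisFun (Fin N) ℝ i := by
      simpa using ((EuclideanSpace.basisFun (Fin N) ℝ).sum_repr x).symm
    conv_lhs => rw [hx, f.map_sum]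
    simp only [f.map_smul_univ, smul_eq_mul]
  simp only [hexpand]
  refine .sum fun r _ ↦ ?_
  simpa using (IsPolyDegLE.prod (s := Finset.univ) fun i _ ↦ .coord (r i)).mul
    (.const (k := 0) (f fun i ↦ EuclideanSpace.basisFun (Fin N) ℝ (r i)))

open scoped Nat in
theorem isPolyDegLE_taylorPoly (n : ℕ) (f : EuclideanSpace ℝ (Fin N) → ℝ)
    (a : EuclideanSpace ℝ (Fin N)) : IsPolyDegLE N n (taylorPoly (n + 1) f a) := by
  refine .sum fun j hj ↦ .mono (Nat.lt_succ_iff.1 (Finset.mem_range.1 hj)) ?_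
  have hdiag := (isPolyDegLE_multilinear_diag
    ((j ! : ℝ)⁻¹ • iteratedFDeriv ℝ j f a)).comp_add_smul (-a) 1
  simpa [neg_add_eq_sub] using hdiag

end Polynomials

section FiniteDimensional

open scoped ContDiff

theorem exists_norm_le_mul_norm_of_injective {V X Y : Type*} [AddCommGroup V] [Module ℝ V]
    [FiniteDimensional ℝ V] [NormedAddCommGroup X] [NormedSpace ℝ X] [NormedAddCommGroup Y]
    [NormedSpace ℝ Y] (f : V →ₗ[ℝ] X) {g : V →ₗ[ℝ] Y} (hg : Function.Injective g) :
    ∃ C : ℝ, 0 < C ∧ ∀ v, ‖f v‖ ≤ C * ‖g v‖ := by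
  set e := LinearEquiv.ofInjective g hg
  set T : LinearMap.range g →L[ℝ] X := LinearMap.toContinuousLinearMap (f ∘ₗ e.symm.toLinearMap)
  refine ⟨‖T‖ + 1, by positivity, fun v ↦ ?_⟩
  calc ‖f v‖ = ‖T (e v)‖ := by simp [T]
    _ ≤ ‖T‖ * ‖e v‖ := T.le_opNorm _
    _ ≤ (‖T‖ + 1) * ‖g v‖ := mul_le_mul_of_nonneg_right (by linarith) (norm_nonneg _)

variable {E F Y : Type*} [NormedAddCommGroup E] [NormedSpace ℝ E] [NormedAddCommGroup F]
  [NormedSpace ℝ F] [NormedAddCommGroup Y] [NormedSpace ℝ Y]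

theorem exists_norm_iteratedFDeriv_le {V : Submodule ℝ (E → F)} [FiniteDimensional ℝ V] {j : ℕ}
    (hV : ∀ f ∈ V, ContDiff ℝ j f) {g : V →ₗ[ℝ] Y} (hg : Function.Injective g) {K : Set E}
    (hK : IsCompact K) :
    ∃ C : ℝ, 0 < C ∧ ∀ f : V, ∀ x ∈ K, ‖iteratedFDeriv ℝ j (f : E → F) x‖ ≤ C * ‖g f‖ := by
  have := isCompact_iff_compactSpace.1 hK
  let D : V →ₗ[ℝ] C(K, E [×j]→L[ℝ] F) :=
    { toFun f := ⟨fun x ↦ iteratedFDeriv ℝ j (f : E → F) x,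
        ((hV f f.2).continuous_iteratedFDeriv le_rfl).comp continuous_subtype_val⟩
      map_add' f₁ f₂ := ContinuousMap.ext fun _ ↦
        iteratedFDeriv_add_apply (hV f₁ f₁.2).contDiffAt (hV f₂ f₂.2).contDiffAt
      map_smul' c f := ContinuousMap.ext fun _ ↦
        iteratedFDeriv_const_smul_apply (hV f f.2).contDiffAt }
  obtain ⟨C, hC, hDg⟩ := exists_norm_le_mul_norm_of_injective
    (X := C(K, E [×j]→L[ℝ] F)) D hg
  exact ⟨C, hC, fun f x hx ↦ ((D f).norm_coe_le_norm ⟨x, hx⟩).trans (hDg f)⟩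

/-- The inclusion into `L²(μ)` of a space of square-integrable functions. It need not be injective,
as functions that agree almost everywhere are identified. -/
def toL2 {α : Type*} [MeasurableSpace α] (μ : Measure α) (V : Submodule ℝ (α → ℝ))
    (hV : ∀ f ∈ V, MemLp f 2 μ) : V →ₗ[ℝ] Lp ℝ 2 μ where
  toFun f := (hV f f.2).toLp f
  map_add' _ _ := rfl
  map_smul' _ _ := rfl

theorem norm_toL2 {α : Type*} [MeasurableSpace α] {μ : Measure α} {V : Submodule ℝ (α → ℝ)}
    (hV : ∀ f ∈ V, MemLp f 2 μ) (f : V) :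
    ‖toL2 μ V hV f‖ = √(∫ x, (f : α → ℝ) x * (f : α → ℝ) x ∂μ) := by
  rw [norm_eq_sqrt_real_inner, L2.inner_def]
  congr 1
  refine integral_congr_ae ?_
  filter_upwards [(hV f f.2).coeFn_toLp] with x hx
  rw [← hx]
  rfl

theorem toL2_injective [MeasurableSpace E] {B : Set E} (hB : IsOpen B) (hBne : B.Nonempty)
    {μ : Measure E} [μ.IsOpenPosMeasure] {V : Submodule ℝ (E → ℝ)} (hV : ∀ f ∈ V, ContDiff ℝ ω f)
    (hV₂ : ∀ f ∈ V, MemLp f 2 (μ.restrict B)) :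
    Function.Injective (toL2 (μ.restrict B) V hV₂) := by
  intro f₁ f₂ h
  have hae : (f₁ : E → ℝ) =ᵐ[μ.restrict B] f₂ :=
    (MemLp.toLp_eq_toLp_iff (hV₂ f₁ f₁.2) (hV₂ f₂ f₂.2)).1 h
  have heqOn : EqOn (f₁ : E → ℝ) f₂ B := Measure.eqOn_open_of_ae_eq hae hB
    (hV f₁ f₁.2).continuous.continuousOn (hV f₂ f₂.2).continuous.continuousOn
  obtain ⟨x₀, hx₀⟩ := hBne
  have hanalytic (f : V) : AnalyticOnNhd ℝ (f : E → ℝ) univ :=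
    contDiff_omega_iff_analyticOnNhd.1 (hV f f.2)
  exact Subtype.ext <| (hanalytic f₁).eq_of_eventuallyEq (hanalytic f₂) <|
    heqOn.eventuallyEq_of_mem (hB.mem_nhds hx₀)

theorem exists_norm_iteratedFDeriv_le_sqrt_setIntegral [ProperSpace E] [MeasurableSpace E]
    [BorelSpace E] {μ : Measure E} [μ.IsOpenPosMeasure] [IsFiniteMeasureOnCompacts μ]
    {V : Submodule ℝ (E → ℝ)} [FiniteDimensional ℝ V] (hV : ∀ f ∈ V, ContDiff ℝ ω f) (j : ℕ)
    {K B : Set E} (hK : IsCompact K) (hB : IsOpen B) (hBne : B.Nonempty)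
    (hBb : Bornology.IsBounded B) :
    ∃ C : ℝ, 0 < C ∧ ∀ f ∈ V, ∀ x ∈ K,
      ‖iteratedFDeriv ℝ j f x‖ ≤ C * √(∫ x in B, f x * f x ∂μ) := by
  have hV₂ (f) (hf : f ∈ V) : MemLp f 2 (μ.restrict B) := by
    have hcont := (hV f hf).continuous
    exact (memLp_two_iff_integrable_sq hcont.aestronglyMeasurable).2 <|
      ((hcont.pow 2).continuousOn.integrableOn_compact hBb.isCompact_closure).mono_set
        subset_closure
  obtain ⟨C, hC, hbound⟩ := exists_norm_iteratedFDeriv_le (fun f hf ↦ (hV f hf).of_le le_top)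
    (toL2_injective hB hBne hV hV₂) hK (j := j)
  refine ⟨C, hC, fun f hf x hx ↦ ?_⟩
  simpa only [norm_toL2] using hbound ⟨f, hf⟩ x hx

end FiniteDimensional

section InverseEstimate

open Module

open scoped Pointwise

theorem setIntegral_ball_comp_add_smul {E F : Type*} [NormedAddCommGroup E] [NormedSpace ℝ E]
    [FiniteDimensional ℝ E] [MeasurableSpace E] [BorelSpace E] (μ : Measure E) [μ.IsAddHaarMeasure]
    [NormedAddCommGroup F] [NormedSpace ℝ F] (f : E → F) (c : E) {h : ℝ} (hh : 0 < h) (r : ℝ) :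
    ∫ z in ball 0 r, f (c + h • z) ∂μ = (h ^ finrank ℝ E)⁻¹ • ∫ x in ball c (r * h), f x ∂μ := by
  have hball : h • ball (0 : E) r = (c + ·) ⁻¹' ball c (r * h) := by
    rw [_root_.smul_ball hh.ne', smul_zero, Real.norm_of_nonneg hh.le, mul_comm,
      preimage_add_ball, sub_self]
  rw [Measure.setIntegral_comp_smul_of_pos μ (fun z ↦ f (c + z)) _ hh, hball,
    (measurePreserving_add_left μ c).setIntegral_preimage_emb (measurableEmbedding_addLeft c)]

theorem exists_pow_mul_norm_iteratedFDeriv_le (N k j : ℕ) {ρ : ℝ} (hρ : 0 < ρ) :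
    ∃ C : ℝ, 0 < C ∧ ∀ q : EuclideanSpace ℝ (Fin N) → ℝ, IsPolyDegLE N k q →
      ∀ (c : EuclideanSpace ℝ (Fin N)) (h : ℝ), 0 < h → ∀ x ∈ closedBall c h,
        h ^ j * ‖iteratedFDeriv ℝ j q x‖ ≤
          C * √((h ^ N)⁻¹ * ∫ y in ball c (ρ * h), q y * q y) := by
  obtain ⟨C, hC, hunit⟩ := exists_norm_iteratedFDeriv_le_sqrt_setIntegral (μ := volume)
    (V := polyDegLE N k) (fun f hf ↦ (mem_polyDegLE.1 hf).contDiff) j (isCompact_closedBall 0 1)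
    isOpen_ball ⟨0, mem_ball_self hρ⟩ isBounded_ball
  refine ⟨C, hC, fun q hq c h hh x hx ↦ ?_⟩
  obtain ⟨z, hz, rfl⟩ : ∃ z ∈ closedBall (0 : EuclideanSpace ℝ (Fin N)) 1, c + h • z = x := by
    refine ⟨h⁻¹ • (x - c), ?_, by simp [smul_smul, hh.ne']⟩
    rwa [mem_closedBall_zero_iff, norm_smul, norm_inv, Real.norm_of_nonneg hh.le,
      inv_mul_le_one₀ hh, ← dist_eq_norm]
  have hderiv : iteratedFDeriv ℝ j (fun y ↦ q (c + h • y)) z =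
      h ^ j • iteratedFDeriv ℝ j q (c + h • z) := by
    have htranslate : ContDiff ℝ j fun y ↦ q (c + y) := hq.contDiff.comp (by fun_prop)
    rw [iteratedFDeriv_comp_const_smul h htranslate]
    simp only [iteratedFDeriv_comp_add_left]
  have hscaled := hunit _ (mem_polyDegLE.2 (hq.comp_add_smul c h)) z hz
  rwa [hderiv, norm_smul, norm_pow, Real.norm_of_nonneg hh.le,
    setIntegral_ball_comp_add_smul volume (fun y ↦ q y * q y) c hh, finrank_euclideanSpace_fin,
    smul_eq_mul] at hscaled

end InverseEstimate

section L2Projection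

variable {N k : ℕ} {U : Set (EuclideanSpace ℝ (Fin N))} {g P w : EuclideanSpace ℝ (Fin N) → ℝ}

/-- `P` is the `L²(U)`-projection of `g` onto the polynomials of total degree at most `k`. -/
def IsL2Proj (k : ℕ) (U : Set (EuclideanSpace ℝ (Fin N))) (g P : EuclideanSpace ℝ (Fin N) → ℝ) :
    Prop :=
  IsPolyDegLE N k P ∧ ∀ q, IsPolyDegLE N k q → ∫ x in U, P x * q x = ∫ x in U, g x * q x

theorem IsPolyDegLE.integrableOn (hw : IsPolyDegLE N k w) (hU : Bornology.IsBounded U) :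
    IntegrableOn w U :=
  (hw.contDiff (n := 0)).continuous.continuousOn.integrableOn_compact hU.isCompact_closure
    |>.mono_set subset_closure

theorem IsPolyDegLE.integrableOn_mul (hw : IsPolyDegLE N k w) (hU : Bornology.IsBounded U)
    (hUm : MeasurableSet U) (hg : IntegrableOn g U) : IntegrableOn (fun x ↦ g x * w x) U := by
  have hcont : Continuous w := (hw.contDiff (n := 0)).continuous
  obtain ⟨M, hM⟩ := hU.isCompact_closure.exists_bound_of_continuousOn hcont.continuousOn
  exact hg.mul_bdd (c := M) hcont.aestronglyMeasurable <|
    ae_restrict_of_forall_mem hUm fun x hx ↦ hM x (subset_closure hx)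

theorem IsL2Proj.sub_poly (hP : IsL2Proj k U g P) (hw : IsPolyDegLE N k w)
    (hU : Bornology.IsBounded U) (hUm : MeasurableSet U) (hg : IntegrableOn g U) :
    IsL2Proj k U (g - w) (P - w) := by
  refine ⟨hP.1.sub hw, fun q hq ↦ ?_⟩
  have hint {f : EuclideanSpace ℝ (Fin N) → ℝ} (hf : IntegrableOn f U) :
      IntegrableOn (fun x ↦ f x * q x) U := hq.integrableOn_mul hU hUm hf
  simp only [Pi.sub_apply, sub_mul]
  rw [integral_sub (hint (hP.1.integrableOn hU)) (hint (hw.integrableOn hU)),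
    integral_sub (hint hg) (hint (hw.integrableOn hU)), hP.2 q hq]

theorem IsL2Proj.setIntegral_mul_self_le (hP : IsL2Proj k U g P) (hU : Bornology.IsBounded U)
    (hUm : MeasurableSet U) (hg : IntegrableOn g U) {M : ℝ} (hM : ∀ x ∈ U, ‖P x‖ ≤ M) :
    ∫ x in U, P x * P x ≤ (∫ x in U, ‖g x‖) * M := by
  rw [hP.2 P hP.1, ← integral_mul_const]
  refine setIntegral_mono_on (hP.1.integrableOn_mul hU hUm hg) (hg.norm.mul_const M) hUm
    fun x hx ↦ (Real.le_norm_self _).trans ?_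
  rw [norm_mul]
  exact mul_le_mul_of_nonneg_left (hM x hx) (norm_nonneg _)

theorem exists_enorm_iteratedFDeriv_l2Proj_le_lintegral_enorm (N k s : ℕ) {ρ : ℝ} (hρ : 0 < ρ) :
    ∃ C : ℝ, 0 < C ∧ ∀ (c : EuclideanSpace ℝ (Fin N)) (h : ℝ), 0 < h →
      ∀ U : Set (EuclideanSpace ℝ (Fin N)), MeasurableSet U → ball c (ρ * h) ⊆ U →
        U ⊆ closedBall c h → ∀ g P : EuclideanSpace ℝ (Fin N) → ℝ, IntegrableOn g U →
          IsL2Proj k U g P → ∀ x ∈ U,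
            ‖iteratedFDeriv ℝ s P x‖ₑ ≤
              ENNReal.ofReal (C * (h ^ N)⁻¹ / h ^ s) * ∫⁻ y in U, ‖g y‖ₑ := by
  obtain ⟨C₀, hC₀, hsup⟩ := exists_pow_mul_norm_iteratedFDeriv_le N k 0 hρ
  obtain ⟨C, hC, hderiv⟩ := exists_pow_mul_norm_iteratedFDeriv_le N k s hρ
  refine ⟨C * C₀, by positivity, fun c h hh U hUm hBU hUh g P hg hP x hx ↦ ?_⟩
  have hUb : Bornology.IsBounded U := isBounded_closedBall.subset hUh
  set J : ℝ := (h ^ N)⁻¹ * ∫ y in ball c (ρ * h), P y * P y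
  set G : ℝ := (h ^ N)⁻¹ * ∫ y in U, ‖g y‖ with hG
  have hPsup : ∀ y ∈ U, ‖P y‖ ≤ C₀ * √J := fun y hy ↦ by
    simpa using hsup P hP.1 c h hh y (hUh hy)
  have hJ : J ≤ √J * (C₀ * G) :=
    calc J ≤ (h ^ N)⁻¹ * ∫ y in U, P y * P y := by
          refine mul_le_mul_of_nonneg_left ?_ (by positivity)
          exact setIntegral_mono_set (hP.1.integrableOn_mul hUb hUm (hP.1.integrableOn hUb))
            (.of_forall fun y ↦ mul_self_nonneg _) (.of_forall hBU)
      _ ≤ (h ^ N)⁻¹ * ((∫ y in U, ‖g y‖) * (C₀ * √J)) :=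
          mul_le_mul_of_nonneg_left (hP.setIntegral_mul_self_le hUb hUm hg hPsup) (by positivity)
      _ = √J * (C₀ * G) := by rw [hG]; ring
  have hJ₀ : 0 ≤ J := mul_nonneg (by positivity) (integral_nonneg fun y ↦ mul_self_nonneg _)
  have hsqrt : √J ≤ C₀ * G := by
    rcases (Real.sqrt_nonneg J).eq_or_lt with h₀ | hpos
    · rw [← h₀]
      positivity
    · exact le_of_mul_le_mul_left ((Real.mul_self_sqrt hJ₀).trans_le hJ) hpos
  have hbound : ‖iteratedFDeriv ℝ s P x‖ ≤ C * C₀ * (h ^ N)⁻¹ / h ^ s * ∫ y in U, ‖g y‖ :=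
    calc _ ≤ C * (C₀ * G) / h ^ s := by
          rw [le_div_iff₀' (by positivity)]
          exact (hderiv P hP.1 c h hh x (hUh hx)).trans (by gcongr)
      _ = _ := by rw [hG]; ring
  rw [← ofReal_integral_norm_eq_lintegral_enorm hg, ← ENNReal.ofReal_mul (by positivity),
    ← ofReal_norm]
  exact ENNReal.ofReal_le_ofReal hbound

end L2Projection

section BrambleHilbert

open Module

theorem measure_ball_add_measure_div_le {E : Type*} [NormedAddCommGroup E] [NormedSpace ℝ E]
    [FiniteDimensional ℝ E] [MeasurableSpace E] [BorelSpace E] (μ : Measure E) [μ.IsAddHaarMeasure]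
    {U : Set E} {c : E} {ρ h : ℝ} (hρ : 0 < ρ) (hh : 0 < h) (hU : U ⊆ closedBall c h) :
    (μ (ball c (ρ * h)) + μ U) / μ (ball c (ρ * h)) ≤
      ENNReal.ofReal (1 + (ρ ^ finrank ℝ E)⁻¹) := by
  have hUball : μ U ≤ ENNReal.ofReal (ρ ^ finrank ℝ E)⁻¹ * μ (ball c (ρ * h)) := by
    rw [Measure.addHaar_ball_of_pos μ c (by positivity), ← mul_assoc,
      ← ENNReal.ofReal_mul (by positivity), mul_pow, inv_mul_cancel_left₀ (by positivity),
      ← Measure.addHaar_closedBall μ c hh.le]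
    exact measure_mono hU
  refine ENNReal.div_le_of_le_mul ?_
  rw [ENNReal.ofReal_add zero_le_one (by positivity), add_mul, ENNReal.ofReal_one, one_mul]
  gcongr

theorem exists_isPolyDegLE_lintegral_sub_le {N k s : ℕ} (hsk : s ≤ k + 1) {ρ : ℝ} (hρ : 0 < ρ)
    {U : Set (EuclideanSpace ℝ (Fin N))} (hU : IsOpen U) (hUb : Bornology.IsBounded U)
    (hdiam : 0 < diam U) {c : EuclideanSpace ℝ (Fin N)} (hBU : ball c (ρ * diam U) ⊆ U)
    (hstar : ∀ y ∈ ball c (ρ * diam U), StarConvex ℝ y U)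
    {v : EuclideanSpace ℝ (Fin N) → ℝ} (hv : ContDiffOn ℝ s v U) :
    ∃ w, IsPolyDegLE N k w ∧ iteratedFDeriv ℝ s w = 0 ∧
      ∫⁻ x in U, ‖v x - w x‖ₑ ≤ ENNReal.ofReal (diam U ^ s * (2 ^ N * (1 + (ρ ^ N)⁻¹))) *
        ∫⁻ x in U, ‖iteratedFDeriv ℝ s v x‖ₑ := by
  have hc : c ∈ U := hBU (mem_ball_self (by positivity))
  have hpos : 0 < volume (ball c (ρ * diam U)) := measure_ball_pos _ _ (by positivity)
  rcases s with _ | n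
  · refine ⟨fun _ ↦ 0, .const 0, by ext; simp, ?_⟩
    have hone : (1 : ℝ) ≤ diam U ^ 0 * (2 ^ N * (1 + (ρ ^ N)⁻¹)) := by
      rw [pow_zero, one_mul]
      exact one_le_mul_of_one_le_of_one_le (one_le_pow₀ one_le_two)
        (le_add_of_nonneg_right (by positivity))
    simpa [← ofReal_norm] using le_mul_of_one_le_left' (ENNReal.one_le_ofReal.2 hone)
  obtain ⟨y, -, hy⟩ := exists_mem_lintegral_sub_taylorPoly_le (μ := volume) hU hv hstar hpos.ne'
    measure_ball_lt_top.ne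
  refine ⟨_, (isPolyDegLE_taylorPoly n v y).mono (by lia), iteratedFDeriv_taylorPoly _ v y,
    hy.trans ?_⟩
  have hUdiam : U ⊆ closedBall c (diam U) := fun x hx ↦ dist_le_diam_of_mem hUb hx hc
  have hratio := measure_ball_add_measure_div_le volume hρ hdiam hUdiam
  have hofReal_diam : ENNReal.ofReal (diam U) = ediam U :=
    ENNReal.ofReal_toReal hUb.ediam_ne_top
  rw [finrank_euclideanSpace_fin] at hratio ⊢
  rw [ENNReal.ofReal_mul (by positivity), ENNReal.ofReal_mul (by positivity),
    ENNReal.ofReal_pow diam_nonneg, ENNReal.ofReal_pow zero_le_two, ENNReal.ofReal_ofNat,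
    hofReal_diam, mul_assoc (ediam U ^ (n + 1))]
  gcongr

end BrambleHilbert

theorem exists_enorm_iteratedFDeriv_l2Proj_le {N k s : ℕ} (hN : 1 ≤ N) (hsk : s ≤ k + 1) {ρ : ℝ}
    (hρ : 0 < ρ) :
    ∃ C : ℝ, 0 < C ∧ ∀ U : Set (EuclideanSpace ℝ (Fin N)),
      IsOpen U → Bornology.IsBounded U → StarShapedWrtBall ρ U →
        ∀ v P : EuclideanSpace ℝ (Fin N) → ℝ, ContDiffOn ℝ s v U → IsL2Proj k U v P → ∀ x ∈ U,
          ‖iteratedFDeriv ℝ s P x‖ₑ ≤ ENNReal.ofReal (C * (diam U ^ N)⁻¹) *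
            ∫⁻ y in U, ‖iteratedFDeriv ℝ s v y‖ₑ := by
  obtain ⟨C, hC, hproj⟩ := exists_enorm_iteratedFDeriv_l2Proj_le_lintegral_enorm N k s hρ
  refine ⟨C * (2 ^ N * (1 + (ρ ^ N)⁻¹)), by positivity, ?_⟩
  rintro U hU hUb ⟨c, hBU, hstar⟩ v P hv hP x hx
  have : Nonempty (Fin N) := ⟨⟨0, hN⟩⟩
  have hdiam : 0 < diam U := diam_pos (infinite_of_mem_nhds x (hU.mem_nhds hx)).nontrivial hUb
  have hUdiam : U ⊆ closedBall c (diam U) := fun y hy ↦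
    dist_le_diam_of_mem hUb hy (hBU (mem_ball_self (by positivity)))
  by_cases hfin : ∫⁻ y in U, ‖iteratedFDeriv ℝ s v y‖ₑ = ∞
  · rw [hfin, ENNReal.mul_top (ENNReal.ofReal_pos.2 (by positivity)).ne']
    exact le_top
  obtain ⟨w, hw, hDw, hvw⟩ := exists_isPolyDegLE_lintegral_sub_le hsk hρ hU hUb hdiam hBU
    (fun y hy ↦ starConvex_iff_segment_subset.2 fun x hx ↦ hstar y hy x hx) hv
  have hvw_int : IntegrableOn (v - w) U :=
    ⟨(hv.continuousOn.sub (hw.contDiff (n := 0)).continuous.continuousOn).aestronglyMeasurable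
      hU.measurableSet, hvw.trans_lt (by finiteness)⟩
  have hv_int : IntegrableOn v U := by simpa using hvw_int.add (hw.integrableOn hUb)
  have hDP : iteratedFDeriv ℝ s (P - w) x = iteratedFDeriv ℝ s P x := by
    rw [iteratedFDeriv_sub_apply hP.1.contDiff.contDiffAt hw.contDiff.contDiffAt, hDw]
    exact sub_zero _
  calc ‖iteratedFDeriv ℝ s P x‖ₑ
      ≤ ENNReal.ofReal (C * (diam U ^ N)⁻¹ / diam U ^ s) * ∫⁻ y in U, ‖(v - w) y‖ₑ :=
        hDP ▸ hproj c _ hdiam U hU.measurableSet hBU hUdiam _ _ hvw_int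
          (hP.sub_poly hw hUb hU.measurableSet hv_int) x hx
    _ ≤ ENNReal.ofReal (C * (diam U ^ N)⁻¹ / diam U ^ s) *
        (ENNReal.ofReal (diam U ^ s * (2 ^ N * (1 + (ρ ^ N)⁻¹))) *
          ∫⁻ y in U, ‖iteratedFDeriv ℝ s v y‖ₑ) := by gcongr; exact hvw
    _ = _ := by
        rw [← mul_assoc, ← ENNReal.ofReal_mul (by positivity)]
        congr 2
        field_simp

theorem measure_le_ofReal_diam_pow_mul {E : Type*} [NormedAddCommGroup E] [NormedSpace ℝ E]
    [FiniteDimensional ℝ E] [MeasurableSpace E] [BorelSpace E] (μ : Measure E) [μ.IsAddHaarMeasure]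
    {U : Set E} (hU : Bornology.IsBounded U) :
    μ U ≤ ENNReal.ofReal (diam U ^ Module.finrank ℝ E) * μ (ball 0 1) := by
  rcases U.eq_empty_or_nonempty with rfl | ⟨c, hc⟩
  · simp
  rw [← Measure.addHaar_closedBall μ c diam_nonneg]
  exact measure_mono fun x hx ↦ dist_le_diam_of_mem hU hx hc

theorem wsp_stability_of_l2_projection_general {N k s : ℕ} (hN : 1 ≤ N) (hsk : s ≤ k + 1) {ρ : ℝ}
    (hρ : 0 < ρ) :
    ∃ C : ℝ, 0 < C ∧ ∀ p : ℝ≥0∞, 1 ≤ p → ∀ U : Set (EuclideanSpace ℝ (Fin N)),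
      IsOpen U → Bornology.IsBounded U → StarShapedWrtBall ρ U →
        ∀ v P : EuclideanSpace ℝ (Fin N) → ℝ, ContDiffOn ℝ s v U → IsL2Proj k U v P →
          sobSemi s p U P ≤ ENNReal.ofReal C * sobSemi s p U v := by
  obtain ⟨C, hC, hbound⟩ := exists_enorm_iteratedFDeriv_l2Proj_le hN hsk hρ
  set ω := volume.real (ball (0 : EuclideanSpace ℝ (Fin N)) 1)
  have hω : 0 < ω := ENNReal.toReal_pos (measure_ball_pos _ _ one_pos).ne' measure_ball_lt_top.ne
  refine ⟨C * ω, by positivity, fun p hp U hU hUb hstar v P hv hP ↦ ?_⟩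
  have : IsFiniteMeasure (volume.restrict U) := ⟨by simpa using hUb.measure_lt_top⟩
  have hholder := eLpNorm_le_of_ae_enorm_le_lintegral (μ := volume.restrict U) hp
    ((ContinuousOn.continuousOn_iteratedFDeriv hv hU le_rfl).aestronglyMeasurable hU.measurableSet)
    (ae_restrict_of_forall_mem hU.measurableSet (hbound U hU hUb hstar v P hv hP))
  rw [Measure.restrict_apply_univ] at hholder
  simp only [sobSemi, eLpNorm_norm]
  refine hholder.trans (mul_le_mul_left ?_ _)
  have hvolume : volume U ≤ ENNReal.ofReal (diam U ^ N * ω) := by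
    rw [ENNReal.ofReal_mul (by positivity), ofReal_measureReal measure_ball_lt_top.ne]
    simpa using measure_le_ofReal_diam_pow_mul volume hUb
  calc ENNReal.ofReal (C * (diam U ^ N)⁻¹) * volume U
      ≤ ENNReal.ofReal (C * (diam U ^ N)⁻¹ * (diam U ^ N * ω)) := by
        rw [ENNReal.ofReal_mul (p := C * (diam U ^ N)⁻¹) (by positivity)]
        gcongr
    _ ≤ ENNReal.ofReal (C * ω) := by
        rw [mul_assoc, ← mul_assoc _ _ ω]
        gcongr
        exact mul_le_of_le_one_left hω.le inv_mul_le_one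

/-- $W^{s,p}$-stability of $L^2$-projections on local polynomial spaces. -/
theorem wsp_stability_of_l2_projection
    (N k : ℕ) (hN : 1 ≤ N) (s : ℕ) (hs : 1 ≤ s) (hsk : s ≤ k + 1)
    (p : ℝ≥0∞) (hp : 1 ≤ p) (ρ : ℝ) (hρ : 0 < ρ) :
    ∃ C : ℝ, 0 < C ∧
      ∀ U : Set (EuclideanSpace ℝ (Fin N)),
        IsOpen U → Bornology.IsBounded U → StarShapedWrtBall ρ U →
        ∀ v : EuclideanSpace ℝ (Fin N) → ℝ,
          (∃ V, IsOpen V ∧ closure U ⊆ V ∧ ContDiffOn ℝ (⊤ : ℕ∞) v V) →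
        ∀ P : EuclideanSpace ℝ (Fin N) → ℝ, IsPolyDegLE N k P →
          (∀ q : EuclideanSpace ℝ (Fin N) → ℝ, IsPolyDegLE N k q →
            ∫ x in U, P x * q x = ∫ x in U, v x * q x) →
          sobSemi s p U P ≤ ENNReal.ofReal C * sobSemi s p U v := by
  obtain ⟨C, hC, hstable⟩ := wsp_stability_of_l2_projection_general hN hsk hρ
  exact ⟨C, hC, fun U hU hUb hstar v ⟨V, _, hUV, hv⟩ P hP hproj ↦ hstable p hp U hU hUb hstar v P
    ((hv.mono (subset_closure.trans hUV)).of_le (mod_cast le_top)) ⟨hP, hproj⟩⟩
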